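/- arXiv:2108.05295 — 7 statements merged into one kernel-verified Lean document; each statement's English description precedes it below -/
import Mathlib

section
/- Let B be a 2-connected finite simple graph containing a cycle of length ℓ with ℓ ≥ 9 and containing three mutually adjacent vertices x, y, z. Then there exists an integer ℓ' with 3ℓ' ≥ ℓ + 6 such that B contains a cycle of length ℓ' and a cycle of length ℓ' − 1. -/
/-- A finite simple graph is 2-connected if it has at least 3 vertices and
deleting any single vertex leaves it connected. -/
def TwoConnected {V : Type*} [Fintype V] (G : SimpleGraph V) : Prop :=
  3 ≤ Fintype.card V ∧ ∀ v : V, (G.induce ({v}ᶜ : Set V)).Connected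

open SimpleGraph

theorem aux_append {V : Type*} {G : SimpleGraph V} {u v w : V} {p : G.Walk u v} {q : G.Walk v w}
    (hp : p.IsPath) (hq : q.IsPath) (h : ∀ t ∈ p.support, t ∈ q.support → t = v) :
    (p.append q).IsPath := by
  rw [Walk.isPath_def, Walk.support_append, List.nodup_append']
  have hq' := hq.support_nodup
  rw [← Walk.cons_tail_support] at hq'
  refine ⟨hp.support_nodup, (List.nodup_cons.1 hq').2, ?_⟩
  intro t ht ht'
  have := h t ht (List.mem_of_mem_tail ht')
  subst this
  exact (List.nodup_cons.1 hq').1 ht'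

theorem aux_meet {V : Type*} {G : SimpleGraph V} {u v w : V} {p : G.Walk u v} {q : G.Walk v w}
    (h : (p.append q).IsPath) {t : V} (hp : t ∈ p.support) (hq : t ∈ q.support) : t = v := by
  by_contra hne
  exact h.ne_of_mem_support_of_append hne hp hq rfl

/-- First hit of a walk on a set. -/
theorem aux_first {V : Type*} {G : SimpleGraph V} (S : Set V) {u a : V} (p : G.Walk u a)
    (ha : a ∈ S) : ∃ (b : V) (q : G.Walk u b), b ∈ S ∧ q.IsPath ∧
      (∀ t ∈ q.support, t ∈ S → t = b) ∧ (∀ t ∈ q.support, t ∈ p.support) := by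
  classical
  induction p with
  | nil => exact ⟨_, Walk.nil, ha, by simp, by simp, by simp⟩
  | @cons u v w h p ih =>
    by_cases hu : u ∈ S
    · exact ⟨u, Walk.nil, hu, by simp, by simp, by simp⟩
    · obtain ⟨b, q, hb, -, h1, h2⟩ := ih ha
      refine ⟨b, (Walk.cons h q).bypass, hb, Walk.bypass_isPath _, ?_, ?_⟩
      · intro t ht htS
        have := Walk.support_bypass_subset_support _ ht
        rw [Walk.support_cons, List.mem_cons] at this
        rcases this with rfl | this
        · exact absurd htS hu
        · exact h1 t this htS
      · intro t ht
        have := Walk.support_bypass_subset_support _ ht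
        rw [Walk.support_cons, List.mem_cons] at this ⊢
        exact this.imp id (h2 t)

/-- Two disjoint paths from `u`, `v` to `S`, meeting `S` only in their ends. -/
def DPaths {V : Type*} (G : SimpleGraph V) (S : Set V) (u v : V) : Prop :=
  ∃ (a b : V) (P : G.Walk u a) (Q : G.Walk v b), a ∈ S ∧ b ∈ S ∧ P.IsPath ∧ Q.IsPath ∧
    (∀ t ∈ P.support, t ∈ S → t = a) ∧ (∀ t ∈ Q.support, t ∈ S → t = b) ∧
    ∀ t ∈ P.support, t ∉ Q.support

theorem DPaths.of_walks {V : Type*} {G : SimpleGraph V} {S : Set V} {u v a b : V}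
    (P : G.Walk u a) (Q : G.Walk v b) (ha : a ∈ S) (hb : b ∈ S)
    (h : ∀ t ∈ P.support, t ∉ Q.support) : DPaths G S u v := by
  obtain ⟨a', P', ha', h1, h2, h3⟩ := aux_first S P ha
  obtain ⟨b', Q', hb', k1, k2, k3⟩ := aux_first S Q hb
  exact ⟨a', b', P', Q', ha', hb', h1, k1, h2, k2, fun t ht ht' => h t (h3 t ht) (k3 t ht')⟩

theorem DPaths.symm {V : Type*} {G : SimpleGraph V} {S : Set V} {u v : V}
    (h : DPaths G S u v) : DPaths G S v u := by
  obtain ⟨a, b, P, Q, h1, h2, h3, h4, h5, h6, h7⟩ := h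
  exact ⟨b, a, Q, P, h2, h1, h4, h3, h6, h5, fun t ht ht' => h7 t ht' ht⟩

theorem aux_avoid {V : Type*} {G : SimpleGraph V} {u w s : V}
    (hG : (G.induce ({u}ᶜ : Set V)).Connected) (hw : w ≠ u) (hs : s ≠ u) :
    ∃ R : G.Walk w s, u ∉ R.support := by
  have hw' : w ∈ ({u}ᶜ : Set V) := hw
  have hs' : s ∈ ({u}ᶜ : Set V) := hs
  obtain ⟨r⟩ := hG.preconnected ⟨w, hw'⟩ ⟨s, hs'⟩
  have key : u ∉ (r.map (Embedding.induce _).toHom).support := by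
    rw [Walk.support_map]
    intro h
    obtain ⟨⟨t, ht⟩, -, h2⟩ := List.mem_map.1 h
    exact ht h2
  exact ⟨r.map (Embedding.induce _).toHom, key⟩

theorem aux_base {V : Type*} {G : SimpleGraph V} {S : Set V}
    (hG : ∀ v : V, (G.induce ({v}ᶜ : Set V)).Connected)
    (hS : ∀ v : V, ∃ s ∈ S, s ≠ v) {u w : V} (hu : u ∈ S) (hw : w ≠ u) : DPaths G S w u := by
  obtain ⟨s, hs, hsu⟩ := hS u
  obtain ⟨R, hR⟩ := aux_avoid (hG u) hw hsu
  refine DPaths.of_walks R (Walk.nil : G.Walk u u) hs hu ?_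
  intro t ht ht'
  simp only [Walk.support_nil, List.mem_singleton] at ht'
  exact hR (ht' ▸ ht)

theorem aux_step {V : Type*} {G : SimpleGraph V} {S : Set V}
    (hG : ∀ v : V, (G.induce ({v}ᶜ : Set V)).Connected)
    (hS : ∀ v : V, ∃ s ∈ S, s ≠ v) {u v w : V} (huv : G.Adj u v) (h : DPaths G S u v)
    (hw : w ≠ u) : DPaths G S w u := by
  classical
  obtain ⟨a, b, P, Q, ha, hb, hP, hQ, hPS, hQS, hPQ⟩ := h
  obtain ⟨s, hs, hsu⟩ := hS u
  obtain ⟨R, hR⟩ := aux_avoid (hG u) hw hsu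
  obtain ⟨s', R', hs', -, h1, h2⟩ :=
    aux_first ({t | t ∈ P.support} ∪ {t | t ∈ Q.support} ∪ S) R (Or.inr hs)
  have huR : u ∉ R'.support := fun h => hR (h2 u h)
  have hs'u : s' ≠ u := fun h => huR (h ▸ R'.end_mem_support)
  by_cases hsP : s' ∈ P.support
  · refine DPaths.of_walks (R'.append (P.dropUntil s' hsP)) (Walk.cons huv Q) ha hb ?_
    have huP : u ∉ (P.dropUntil s' hsP).support := by
      intro h
      refine hs'u (aux_meet (p := P.takeUntil s' hsP) (q := P.dropUntil s' hsP) ?_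
        (Walk.start_mem_support _) h).symm
      rwa [Walk.take_spec]
    intro t ht ht'
    rw [Walk.mem_support_append_iff] at ht
    rw [Walk.support_cons, List.mem_cons] at ht'
    rcases ht' with rfl | ht'
    · exact ht.elim huR huP
    · rcases ht with ht | ht
      · have := h1 t ht (Or.inl (Or.inr ht'))
        subst this
        exact hPQ _ hsP ht'
      · exact hPQ _ (Walk.support_dropUntil_subset_support _ _ ht) ht'
  · have key : ∀ t ∈ R'.support, t ∉ P.support := by
      intro t ht ht'
      have := h1 t ht (Or.inl (Or.inl ht'))
      subst this
      exact hsP ht'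
    by_cases hsQ : s' ∈ Q.support
    · refine DPaths.of_walks (R'.append (Q.dropUntil s' hsQ)) P hb ha ?_
      intro t ht ht'
      rw [Walk.mem_support_append_iff] at ht
      rcases ht with ht | ht
      · exact key t ht ht'
      · exact hPQ _ ht' (Walk.support_dropUntil_subset_support _ _ ht)
    · have hsS : s' ∈ S := by
        rcases hs' with (h | h) | h
        · exact absurd h hsP
        · exact absurd h hsQ
        · exact h
      exact DPaths.of_walks R' P hsS ha key

theorem aux_menger {V : Type*} {G : SimpleGraph V} {S : Set V}
    (hG : ∀ v : V, (G.induce ({v}ᶜ : Set V)).Connected)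
    (hS : ∀ v : V, ∃ s ∈ S, s ≠ v) {x y : V} (hxy : G.Adj x y) : DPaths G S x y := by
  have key : ∀ {u s : V} (_ : G.Walk u s), s ∈ S → (∃ v, G.Adj u v) →
      ∃ v, G.Adj u v ∧ DPaths G S u v := by
    intro u s p
    induction p with
    | nil =>
      rintro hs ⟨v, hv⟩
      exact ⟨v, hv, (aux_base hG hS hs hv.ne').symm⟩
    | @cons u v w h p ih =>
      intro hs _
      obtain ⟨v', hv', hD⟩ := ih hs ⟨_, h.symm⟩
      exact ⟨v, h, aux_step hG hS hv' hD h.ne⟩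
  obtain ⟨s, hs, hsx⟩ := hS x
  obtain ⟨s, hs, hsy⟩ := hS y
  obtain ⟨R, -⟩ := aux_avoid (hG y) hxy.ne hsy
  obtain ⟨v, hv, hD⟩ := key (Walk.cons hxy.symm R) hs ⟨_, hxy.symm⟩
  exact aux_step hG hS hv hD hxy.ne

theorem aux_triangle {V : Type*} {G : SimpleGraph V} {x y z : V} (hxy : G.Adj x y)
    (hyz : G.Adj y z) (hxz : G.Adj x z) {ℓ : ℕ} (hℓ : 9 ≤ ℓ) (W : G.Walk x y) (hW : W.IsPath)
    (hz : z ∉ W.support) (hlen : ℓ ≤ 3 * W.length) :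
    ∃ ℓ' : ℕ, ℓ + 6 ≤ 3 * ℓ' ∧
      (∃ (v : V) (c : G.Walk v v), c.IsCycle ∧ c.length = ℓ') ∧
      (∃ (v : V) (c : G.Walk v v), c.IsCycle ∧ c.length = ℓ' - 1) := by
  refine ⟨W.length + 2, by omega, ⟨_, Walk.cons hyz (Walk.cons hxz.symm W), ?_, by simp⟩,
    ⟨_, Walk.cons hxy.symm W, ?_, by simp⟩⟩
  · rw [Walk.isCycle_iff_isPath_tail_and_le_length]
    refine ⟨?_, by simp; omega⟩
    simpa using ⟨hW, hz⟩
  · rw [Walk.isCycle_iff_isPath_tail_and_le_length]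
    refine ⟨?_, by simp; omega⟩
    simpa using hW

theorem aux_core {V : Type*} {G : SimpleGraph V} {S : Set V} {x y z a b : V} (hxy : G.Adj x y)
    (hyz : G.Adj y z) (hxz : G.Adj x z) {ℓ : ℕ} (hℓ : 9 ≤ ℓ)
    (P : G.Walk x a) (Q : G.Walk y b) (A : G.Walk a b)
    (hP : P.IsPath) (hQ : Q.IsPath) (hA : A.IsPath)
    (hPS : ∀ t ∈ P.support, t ∈ S → t = a) (hQS : ∀ t ∈ Q.support, t ∈ S → t = b)
    (hAS : ∀ t ∈ A.support, t ∈ S) (hPQ : ∀ t ∈ P.support, t ∉ Q.support)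
    (hzP : z ∉ P.support) (hzQ : z ∉ Q.support) (hzA : z ∉ A.support)
    (hlen : ℓ ≤ 3 * A.length) :
    ∃ ℓ' : ℕ, ℓ + 6 ≤ 3 * ℓ' ∧
      (∃ (v : V) (c : G.Walk v v), c.IsCycle ∧ c.length = ℓ') ∧
      (∃ (v : V) (c : G.Walk v v), c.IsCycle ∧ c.length = ℓ' - 1) := by
  refine aux_triangle hxy hyz hxz hℓ ((P.append A).append Q.reverse) ?_ ?_ ?_
  · refine aux_append (aux_append hP hA fun t ht ht' => hPS t ht (hAS t ht')) hQ.reverse ?_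
    intro t ht ht'
    rw [Walk.support_reverse, List.mem_reverse] at ht'
    rw [Walk.mem_support_append_iff] at ht
    rcases ht with ht | ht
    · exact absurd ht' (hPQ t ht)
    · exact hQS t ht' (hAS t ht)
  · simp only [Walk.mem_support_append_iff, Walk.support_reverse, List.mem_reverse]
    tauto
  · simp only [Walk.length_append, Walk.length_reverse]
    omega

theorem aux_split {V : Type*} {G : SimpleGraph V} {v a b : V} (c : G.Walk v v) (hc : c.IsCycle)
    (ha : a ∈ c.support) (hb : b ∈ c.support) (hab : a ≠ b) :
    ∃ (A : G.Walk a b) (A' : G.Walk b a), A.IsPath ∧ A'.IsPath ∧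
      A.length + A'.length = c.length ∧
      (∀ t ∈ A.support, t ∈ A'.support → t = a ∨ t = b) ∧
      (∀ t, t ∈ c.support ↔ t ∈ A.support ∨ t ∈ A'.support) := by
  classical
  have hr : (c.rotate a ha).IsCycle := hc.rotate ha
  have hb' : b ∈ (c.rotate a ha).support := by
    rwa [Walk.mem_support_rotate_iff]
  have spec := Walk.take_spec _ hb'
  have hcy := hr
  rw [← spec] at hcy
  refine ⟨(c.rotate a ha).takeUntil b hb', (c.rotate a ha).dropUntil b hb',
    hr.isPath_takeUntil hb', ?_, ?_, ?_, ?_⟩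
  · exact hcy.isPath_of_append_right (Walk.not_nil_of_ne hab)
  · rw [← Walk.length_append, spec, Walk.length_rotate]
  · intro t h1 h2
    have hn := hcy.support_nodup
    rw [Walk.tail_support_append, List.nodup_append'] at hn
    rw [Walk.mem_support_iff] at h1 h2
    rcases h1 with h1 | h1
    · exact Or.inl h1
    rcases h2 with h2 | h2
    · exact Or.inr h2
    exact absurd h2 (hn.2.2 h1)
  · intro t
    rw [← Walk.mem_support_append_iff, spec, Walk.mem_support_rotate_iff]

/-- The situation with the third vertex on the first arc. -/
theorem aux_three {V : Type*} {G : SimpleGraph V} {S : Set V} {x y z a b : V} (hxy : G.Adj x y)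
    (hyz : G.Adj y z) (hxz : G.Adj x z) {ℓ : ℕ} (hℓ : 9 ≤ ℓ)
    (P : G.Walk x a) (Q : G.Walk y b) (A A' : G.Walk a b)
    (hP : P.IsPath) (hQ : Q.IsPath) (hA : A.IsPath) (hA' : A'.IsPath)
    (hPS : ∀ t ∈ P.support, t ∈ S → t = a) (hQS : ∀ t ∈ Q.support, t ∈ S → t = b)
    (hAS : ∀ t ∈ A.support, t ∈ S) (hAS' : ∀ t ∈ A'.support, t ∈ S)
    (hAA : ∀ t ∈ A.support, t ∈ A'.support → t = a ∨ t = b)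
    (hPQ : ∀ t ∈ P.support, t ∉ Q.support)
    (hzP : z ∉ P.support) (hzQ : z ∉ Q.support) (hzA : z ∈ A.support)
    (hlen : A.length + A'.length = ℓ) :
    ∃ ℓ' : ℕ, ℓ + 6 ≤ 3 * ℓ' ∧
      (∃ (v : V) (c : G.Walk v v), c.IsCycle ∧ c.length = ℓ') ∧
      (∃ (v : V) (c : G.Walk v v), c.IsCycle ∧ c.length = ℓ' - 1) := by
  classical
  have hza : z ≠ a := fun h => hzP (h ▸ P.end_mem_support)
  have hzb : z ≠ b := fun h => hzQ (h ▸ Q.end_mem_support)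
  by_cases h3 : ℓ ≤ 3 * A'.length
  · refine aux_core hxy hyz hxz hℓ P Q A' hP hQ hA' hPS hQS hAS' hPQ hzP hzQ ?_ h3
    intro h
    exact (hAA z hzA h).elim hza hzb
  have hsp := A.take_spec hzA
  obtain ⟨A1, A2, rfl⟩ : ∃ (A1 : G.Walk a z) (A2 : G.Walk z b), A = A1.append A2 :=
    ⟨_, _, hsp.symm⟩
  have hl := Walk.length_append A1 A2
  simp only [Walk.mem_support_append_iff] at hAS
  by_cases h1 : ℓ ≤ 3 * A1.length
  · refine aux_core hxz hyz.symm hxy hℓ P (Walk.nil : G.Walk z z) A1 hP (by simp)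
      hA.of_append_left hPS (by simp) (fun t ht => hAS t (Or.inl ht)) ?_ ?_ ?_ ?_ h1
    · intro t ht ht'
      simp only [Walk.support_nil, List.mem_singleton] at ht'
      exact hzP (ht' ▸ ht)
    · exact fun h => hPQ y h Q.start_mem_support
    · simpa using hyz.ne
    · intro h
      have hyb := hQS y Q.start_mem_support (hAS y (Or.inl h))
      refine hzb (aux_meet hA (t := b) (hyb ▸ h) A2.end_mem_support).symm
  · refine aux_core hyz.symm hxy.symm hxz.symm hℓ (Walk.nil : G.Walk z z) Q A2 (by simp) hQ
      hA.of_append_right (by simp) hQS (fun t ht => hAS t (Or.inr ht)) ?_ ?_ ?_ ?_ (by omega)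
    · intro t ht ht'
      simp only [Walk.support_nil, List.mem_singleton] at ht
      exact hzQ (ht ▸ ht')
    · simpa using hxz.ne
    · exact fun h => hPQ x P.start_mem_support h
    · intro h
      have hxa := hPS x P.start_mem_support (hAS x (Or.inr h))
      refine hza (aux_meet hA (t := a) A1.start_mem_support (hxa ▸ h)).symm

theorem aux_main {V : Type*} {G : SimpleGraph V} {v x y z a b : V} (c : G.Walk v v)
    (hc : c.IsCycle) (hxy : G.Adj x y)
    (hyz : G.Adj y z) (hxz : G.Adj x z) (hℓ : 9 ≤ c.length)
    (P : G.Walk x a) (Q : G.Walk y b) (ha : a ∈ c.support) (hb : b ∈ c.support)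
    (hP : P.IsPath) (hQ : Q.IsPath)
    (hPS : ∀ t ∈ P.support, t ∈ c.support → t = a) (hQS : ∀ t ∈ Q.support, t ∈ c.support → t = b)
    (hPQ : ∀ t ∈ P.support, t ∉ Q.support)
    (hzP : z ∉ P.support) (hzQ : z ∉ Q.support) :
    ∃ ℓ' : ℕ, c.length + 6 ≤ 3 * ℓ' ∧
      (∃ (v : V) (c : G.Walk v v), c.IsCycle ∧ c.length = ℓ') ∧
      (∃ (v : V) (c : G.Walk v v), c.IsCycle ∧ c.length = ℓ' - 1) := by
  have hab : a ≠ b := by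
    rintro rfl
    exact hPQ a P.end_mem_support Q.end_mem_support
  obtain ⟨A, A', hA, hA', hl, hAA, hS⟩ := aux_split c hc ha hb hab
  have hA'r : ∀ t, t ∈ A'.reverse.support ↔ t ∈ A'.support := by simp
  have hlr : A'.reverse.length = A'.length := by simp
  by_cases h1 : z ∈ A.support
  · exact aux_three (S := {t | t ∈ c.support}) hxy hyz hxz hℓ P Q A A'.reverse hP hQ hA hA'.reverse
      hPS hQS (fun t ht => (hS t).2 (Or.inl ht)) (fun t ht => (hS t).2 (Or.inr ((hA'r t).1 ht)))
      (fun t ht ht' => hAA t ht ((hA'r t).1 ht')) hPQ hzP hzQ h1 (by omega)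
  by_cases h2 : z ∈ A'.support
  · exact aux_three (S := {t | t ∈ c.support}) hxy hyz hxz hℓ P Q A'.reverse A hP hQ hA'.reverse hA
      hPS hQS (fun t ht => (hS t).2 (Or.inr ((hA'r t).1 ht))) (fun t ht => (hS t).2 (Or.inl ht))
      (fun t ht ht' => hAA t ht' ((hA'r t).1 ht)) hPQ hzP hzQ ((hA'r z).2 h2) (by omega)
  by_cases h3 : c.length ≤ 3 * A.length
  · exact aux_core (S := {t | t ∈ c.support}) hxy hyz hxz hℓ P Q A hP hQ hA
      hPS hQS (fun t ht => (hS t).2 (Or.inl ht)) hPQ hzP hzQ h1 h3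
  · exact aux_core (S := {t | t ∈ c.support}) hxy hyz hxz hℓ P Q A'.reverse hP hQ hA'.reverse
      hPS hQS (fun t ht => (hS t).2 (Or.inr ((hA'r t).1 ht))) hPQ hzP hzQ
      (fun h => h2 ((hA'r z).1 h)) (by omega)

theorem stmt_1 {V : Type*} [Fintype V] (B : SimpleGraph V)
    (hB : TwoConnected B) {ℓ : ℕ} (hℓ : 9 ≤ ℓ)
    (hcyc : ∃ (v : V) (c : B.Walk v v), c.IsCycle ∧ c.length = ℓ)
    {x y z : V} (hxy : B.Adj x y) (hyz : B.Adj y z) (hxz : B.Adj x z) :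
    ∃ ℓ' : ℕ, ℓ + 6 ≤ 3 * ℓ' ∧
      (∃ (v : V) (c : B.Walk v v), c.IsCycle ∧ c.length = ℓ') ∧
      (∃ (v : V) (c : B.Walk v v), c.IsCycle ∧ c.length = ℓ' - 1) := by
  classical
  obtain ⟨v, c, hc, rfl⟩ := hcyc
  have hS : ∀ u : V, ∃ s ∈ {t | t ∈ c.support}, s ≠ u := by
    intro u
    by_cases hu : u = v
    · subst hu
      have hn : ¬ c.Nil := hc.not_nil
      exact ⟨c.snd, Walk.getVert_mem_support _ _, (c.adj_snd hn).ne'⟩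
    · exact ⟨v, c.start_mem_support, fun h => hu h.symm⟩
  obtain ⟨a, b, P, Q, ha, hb, hP, hQ, hPS, hQS, hPQ⟩ :=
    aux_menger (S := {t | t ∈ c.support}) hB.2 hS hxy
  have hdrop : ∀ {s t : V} (R : B.Walk s t) (hR : R.IsPath) (hz : z ∈ R.support), s ≠ z →
      s ∉ (R.dropUntil z hz).support := by
    intro s t R hR hz hsz h
    refine hsz (aux_meet (p := R.takeUntil z hz) (q := R.dropUntil z hz) ?_
        (Walk.start_mem_support _) h)
    rwa [Walk.take_spec]
  by_cases hzP : z ∈ P.support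
  · have hsub : ∀ t ∈ (P.dropUntil z hzP).support, t ∈ P.support := fun t ht =>
      Walk.support_dropUntil_subset_support _ _ ht
    exact aux_main c hc hyz.symm hxy.symm hxz.symm hℓ (P.dropUntil z hzP) Q ha hb
      (hP.dropUntil hzP) hQ (fun t ht => hPS t (hsub t ht)) hQS (fun t ht => hPQ t (hsub t ht))
      (hdrop P hP hzP hxz.ne) (hPQ x P.start_mem_support)
  by_cases hzQ : z ∈ Q.support
  · have hsub : ∀ t ∈ (Q.dropUntil z hzQ).support, t ∈ Q.support := fun t ht =>
      Walk.support_dropUntil_subset_support _ _ ht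
    exact aux_main c hc hxz hyz.symm hxy hℓ P (Q.dropUntil z hzQ) ha hb
      hP (hQ.dropUntil hzQ) hPS (fun t ht => hQS t (hsub t ht))
      (fun t ht ht' => hPQ t ht (hsub t ht'))
      (fun h => hPQ y h Q.start_mem_support) (hdrop Q hQ hzQ hyz.ne)
  exact aux_main c hc hxy hyz hxz hℓ P Q ha hb hP hQ hPS hQS hPQ hzP hzQ
end

section
/- Let k ≥ 5 be an integer and let G be a 2-connected finite simple graph with distinct vertices h and u such that h is adjacent to every vertex of G other than h and u, and h is not adjacent to u. If G contains no cycle of length exactly k, then G contains no h-avoiding path of length k − 2. -/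
open SimpleGraph in
theorem aux_cycle {V : Type*} (G : SimpleGraph V) {h a b : V} (p : G.Walk a b) (hp : p.IsPath)
    (hh : h ∉ p.support) (hab : a ≠ b) (ha : G.Adj h a) (hb : G.Adj h b) :
    ∃ (v : V) (c : G.Walk v v), c.IsCycle ∧ c.length = p.length + 2 := by
  refine ⟨h, Walk.cons ha (p.concat hb.symm), ?_, by simp⟩
  rw [Walk.cons_isCycle_iff]
  refine ⟨hp.concat hh hb.symm, ?_⟩
  rw [Walk.edges_concat]
  intro hm
  simp only [List.concat_eq_append, List.mem_append, List.mem_singleton] at hm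
  rcases hm with hm | hm
  · exact hh (p.fst_mem_support_of_mem_edges hm)
  · simp only [Sym2.eq_iff] at hm
    rcases hm with ⟨_, h2⟩ | ⟨_, h2⟩
    · exact ha.ne h2.symm
    · exact hab h2

open SimpleGraph in
theorem aux_split_s6 {V : Type*} (G : SimpleGraph V) {x b w : V} (q : G.Walk x b)
    (hw : w ∈ q.support) (hne : w ≠ x) :
    ∃ (y : V) (q1 : G.Walk x y) (hyw : G.Adj y w) (q2 : G.Walk w b),
      q = q1.append (Walk.cons hyw q2) := by
  induction q with
  | nil => simp at hw; exact absurd hw hne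
  | @cons x z b hxz r ih =>
    by_cases hz : w = z
    · subst hz
      exact ⟨x, Walk.nil, hxz, r, rfl⟩
    · have hw' : w ∈ r.support := by
        simp only [Walk.support_cons, List.mem_cons] at hw
        exact hw.resolve_left hne
      obtain ⟨y, q1, hyw, q2, e⟩ := ih hw' hz
      exact ⟨y, Walk.cons hxz q1, hyw, q2, by rw [e]; rfl⟩

open SimpleGraph in
theorem aux_nbr {V : Type*} [Fintype V] (G : SimpleGraph V) (hG : TwoConnected G) {h u x : V}
    (hhu : h ≠ u) (hx : x ≠ h) (hxu : x ≠ u) : ∃ w, w ≠ x ∧ G.Adj u w := by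
  obtain ⟨p⟩ := (hG.2 x).preconnected ⟨u, by simpa using hxu.symm⟩ ⟨h, by simpa using hx.symm⟩
  cases p with
  | nil => exact absurd rfl hhu
  | @cons _ z _ hz r => exact ⟨z.1, z.2, hz⟩

open SimpleGraph in
theorem aux_main_s6 {V : Type*} [Fintype V] (G : SimpleGraph V)
    (hG : TwoConnected G) {k : ℕ} (hk : 5 ≤ k)
    {h u : V} (hhu : h ≠ u)
    (hdom : ∀ v : V, v ≠ h → v ≠ u → G.Adj h v) (hnadj : ¬ G.Adj h u)
    (hnocyc : ¬ ∃ (v : V) (c : G.Walk v v), c.IsCycle ∧ c.length = k)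
    {b : V} (p : G.Walk u b) (hp : p.IsPath) (hh : h ∉ p.support) (hl : p.length = k - 2) :
    False := by
  cases p with
  | nil => simp at hl; omega
  | @cons _ x _ hux q =>
  rw [Walk.cons_isPath_iff] at hp
  obtain ⟨hq, huq⟩ := hp
  simp only [Walk.support_cons, List.mem_cons, not_or] at hh
  obtain ⟨_, hhq⟩ := hh
  simp only [Walk.length_cons] at hl
  have key : ∀ v ∈ q.support, G.Adj h v := fun v hv =>
    hdom v (fun e => hhq (e ▸ hv)) (fun e => huq (e ▸ hv))
  obtain ⟨w, hwx, huw⟩ := aux_nbr G hG hhu (x := x) (key x q.start_mem_support).ne.symm hux.ne.symm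
  have hwh : w ≠ h := fun e => hnadj (e ▸ huw.symm)
  have hhw : G.Adj h w := hdom w hwh huw.ne.symm
  by_cases hw : w ∈ q.support
  · obtain ⟨y, q1, hyw, q2, e⟩ := aux_split_s6 G q hw hwx
    have hs : q.support = q1.support ++ q2.support := by
      rw [e, Walk.support_append]; simp
    have hnd := hq.support_nodup
    rw [hs] at hnd huq hhq key
    rw [List.nodup_append] at hnd
    obtain ⟨n1, n2, n3⟩ := hnd
    simp only [List.mem_append, not_or] at huq hhq
    obtain ⟨v, c, hc, hcl⟩ := aux_cycle G (h := h)
      (q1.reverse.append (Walk.cons hux.symm (Walk.cons huw q2)))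
      (by
        rw [Walk.isPath_def, Walk.support_append]
        simp only [Walk.support_reverse, Walk.support_cons, List.tail_cons]
        rw [List.nodup_append]
        refine ⟨by simpa using n1, by simpa using ⟨huq.2, n2⟩, ?_⟩
        intro a ha c hc
        simp only [List.mem_reverse] at ha
        simp only [List.mem_cons] at hc
        rcases hc with rfl | hc
        · rintro rfl; exact huq.1 ha
        · exact n3 a ha c hc)
      (by
        rw [Walk.support_append]
        simp [hhq.1, hhq.2, hhu])
      (n3 y q1.end_mem_support b q2.end_mem_support)
      (key y (by simp)) (key b (by simp))
    refine hnocyc ⟨v, c, hc, ?_⟩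
    rw [e] at hl
    simp at hl hcl
    omega
  · have hsub : ∀ v ∈ (q.take (k - 4)).support, v ∈ q.support := fun v hv =>
      (q.isSubwalk_take _).support_subset hv
    obtain ⟨v, c, hc, hcl⟩ := aux_cycle G (h := h)
      (Walk.cons huw.symm (Walk.cons hux (q.take (k - 4))))
      (by
        rw [Walk.cons_isPath_iff, Walk.cons_isPath_iff]
        refine ⟨⟨hq.take _, fun hm => huq (hsub _ hm)⟩, ?_⟩
        simp only [Walk.support_cons, List.mem_cons, not_or]
        exact ⟨huw.ne.symm, fun hm => hw (hsub _ hm)⟩)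
      (by
        simp only [Walk.support_cons, List.mem_cons, not_or]
        exact ⟨hwh.symm, hhu, fun hm => hhq (hsub _ hm)⟩)
      (fun e => hw (e ▸ hsub _ (Walk.end_mem_support _)))
      hhw (key _ (hsub _ (Walk.end_mem_support _)))
    refine hnocyc ⟨v, c, hc, ?_⟩
    simp [Walk.take_length] at hcl
    omega

theorem stmt_6 {V : Type*} [Fintype V] (G : SimpleGraph V)
    (hG : TwoConnected G) {k : ℕ} (hk : 5 ≤ k)
    {h u : V} (hhu : h ≠ u)
    (hdom : ∀ v : V, v ≠ h → v ≠ u → G.Adj h v) (hnadj : ¬ G.Adj h u)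
    (hnocyc : ¬ ∃ (v : V) (c : G.Walk v v), c.IsCycle ∧ c.length = k) :
    ¬ ∃ (a b : V) (p : G.Walk a b), p.IsPath ∧ h ∉ p.support ∧ p.length = k - 2 := by
  rintro ⟨a, b, p, hp, hh, hl⟩
  by_cases ha : a = u
  · subst ha
    exact aux_main_s6 G hG hk hhu hdom hnadj hnocyc p hp hh hl
  by_cases hb : b = u
  · subst hb
    exact aux_main_s6 G hG hk hhu hdom hnadj hnocyc p.reverse hp.reverse (by simpa using hh)
      (by simpa using hl)
  have hab : a ≠ b := by
    rintro rfl
    have := SimpleGraph.Walk.length_eq_zero_iff.2 (SimpleGraph.Walk.isPath_iff_nil.1 hp)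
    omega
  obtain ⟨v, c, hc, hcl⟩ := aux_cycle G p hp hh hab
    (hdom a (fun e => hh (e ▸ p.start_mem_support)) ha)
    (hdom b (fun e => hh (e ▸ p.end_mem_support)) hb)
  exact hnocyc ⟨v, c, hc, by omega⟩
end

section
/- Let k ≥ 3 be an integer and let G be a finite simple graph with a dominating vertex r. If G contains a cycle of length ℓ for some ℓ ≥ k, then G contains a cycle of length exactly k. -/
theorem close_path {V : Type*} (G : SimpleGraph V) {r : V} (hr : ∀ v : V, v ≠ r → G.Adj r v)
    {u v : V} (p : G.Walk u v) (hp : p.IsPath) (hrp : r ∉ p.support) (hl : 1 ≤ p.length) :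
    ∃ (v : V) (c : G.Walk v v), c.IsCycle ∧ c.length = p.length + 2 := by
  have hu : u ≠ r := by rintro rfl; exact hrp p.start_mem_support
  have hv : v ≠ r := by rintro rfl; exact hrp p.end_mem_support
  refine ⟨r, SimpleGraph.Walk.cons (hr u hu) (p.concat (hr v hv).symm), ?_, by simp⟩
  rw [SimpleGraph.Walk.cons_isCycle_iff]
  refine ⟨hp.concat hrp _, ?_⟩
  rw [SimpleGraph.Walk.edges_concat]
  intro h
  rw [List.concat_eq_append, List.mem_append] at h
  rcases h with h | h
  · exact hrp (p.fst_mem_support_of_mem_edges h)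
  · have huv : u = v := by
      simp only [List.mem_singleton, Sym2.eq_iff] at h
      rcases h with h | h
      · exact absurd h.2 hu
      · exact h.2
    subst huv
    have := (SimpleGraph.Walk.isPath_iff_nil.1 hp).eq_nil
    simp [this] at hl

theorem stmt_7 {V : Type*} [Fintype V] (G : SimpleGraph V)
    {k : ℕ} (hk : 3 ≤ k)
    {r : V} (hr : ∀ v : V, v ≠ r → G.Adj r v)
    {ℓ : ℕ} (hℓ : k ≤ ℓ)
    (hcyc : ∃ (v : V) (c : G.Walk v v), c.IsCycle ∧ c.length = ℓ) :
    ∃ (v : V) (c : G.Walk v v), c.IsCycle ∧ c.length = k := by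
  classical
  obtain ⟨v, c, hc, hlen⟩ := hcyc
  by_cases hrc : r ∈ c.support
  · have hc' := hc.rotate hrc
    have hlen' : (c.rotate r hrc).length = ℓ := by simp [hlen]
    generalize c.rotate r hrc = d at hc' hlen'
    cases d with
    | nil => simp at hlen'; omega
    | cons h p =>
      rw [SimpleGraph.Walk.cons_isCycle_iff] at hc'
      rw [SimpleGraph.Walk.length_cons] at hlen'
      have hl : (p.take (k-2)).length = k - 2 := by
        rw [SimpleGraph.Walk.take_length]; omega
      obtain ⟨w, e, he, hel⟩ := close_path G hr (p.take (k-2)) (hc'.1.take _) (by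
        intro hm
        rw [SimpleGraph.Walk.mem_support_iff_exists_getVert] at hm
        obtain ⟨n, hn, hn'⟩ := hm
        rw [SimpleGraph.Walk.take_getVert] at hn
        have := hc'.1.getVert_injOn (x₁ := min (k-2) n) (x₂ := p.length)
          (by simp; omega) (by simp) (by rw [hn]; simp)
        omega) (by omega)
      exact ⟨w, e, he, by omega⟩
  · have hl : (c.take (k-2)).length = k - 2 := by
      rw [SimpleGraph.Walk.take_length]; omega
    obtain ⟨w, e, he, hel⟩ := close_path G hr (c.take (k-2)) (hc.isPath_take (by omega))
      (fun hm => hrc ((SimpleGraph.Walk.isSubwalk_take c _).support_subset hm)) (by omega)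
    exact ⟨w, e, he, by omega⟩
end

section
/- Let k ≥ 4 be an integer and let G be a finite simple graph with a dominating vertex r. Suppose v ≠ r is a vertex which is the endpoint of an r-avoiding path of length k − 3 in G. Then for every vertex u ≠ v and every integer ℓ with d(u,v) ≤ ℓ ≤ k − 2, there is a path from u to v in G of length exactly ℓ. -/
lemma glue_aux {V : Type*} (G : SimpleGraph V) {r : V} (hr : ∀ w : V, w ≠ r → G.Adj r w)
    {u x v y : V} (s : G.Walk u x) (t : G.Walk v y) (hs : s.IsPath) (ht : t.IsPath)
    (hrs : r ∉ s.support) (hrt : r ∉ t.support)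
    (hd : ∀ z, z ∈ s.support → z ∉ t.support) :
    ∃ q : G.Walk u v, q.IsPath ∧ q.length = s.length + 2 + t.length := by
  have hx : x ≠ r := fun h => hrs (h ▸ s.end_mem_support)
  have hy : y ≠ r := fun h => hrt (h ▸ t.end_mem_support)
  refine ⟨s.append (.cons (hr x hx).symm (.cons (hr y hy) t.reverse)), ?_, ?_⟩
  · rw [SimpleGraph.Walk.isPath_def, SimpleGraph.Walk.support_append, List.nodup_append]
    refine ⟨hs.support_nodup, ?_, ?_⟩
    · have := ht.support_nodup
      simp [SimpleGraph.Walk.support_reverse, hrt, this]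
    · intro a ha b hb hab
      subst hab
      simp [SimpleGraph.Walk.support_reverse] at hb
      rcases hb with h | h
      · exact hrs (h ▸ ha)
      · exact hd _ ha h
  · simp
    omega

theorem stmt_8 {V : Type*} [Fintype V] (G : SimpleGraph V)
    {k : ℕ} (hk : 4 ≤ k)
    {r : V} (hr : ∀ w : V, w ≠ r → G.Adj r w)
    {v : V} (hvr : v ≠ r)
    (hpath : ∃ (w : V) (p : G.Walk v w), p.IsPath ∧ r ∉ p.support ∧ p.length = k - 3) :
    ∀ u : V, u ≠ v → ∀ ℓ : ℕ, G.dist u v ≤ ℓ → ℓ ≤ k - 2 →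
      ∃ q : G.Walk u v, q.IsPath ∧ q.length = ℓ := by
  obtain ⟨w, p, hp, hrp, hlen⟩ := hpath
  intro u huv ℓ hdl hlk
  have hreach : G.Reachable u v := by
    have h : ∀ a, G.Reachable r a := fun a => by
      by_cases ha : a = r
      · subst ha; exact .refl _
      · exact (hr a ha).reachable
    exact (h u).symm.trans (h v)
  have hpos : 0 < G.dist u v := hreach.pos_dist_of_ne huv
  have hinj := hp.getVert_injOn
  have hsub : ∀ n, ∀ z ∈ (p.take n).support, ∃ j ≤ n, j ≤ p.length ∧ p.getVert j = z := by
    intro n z hz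
    rw [SimpleGraph.Walk.mem_support_iff_exists_getVert] at hz
    obtain ⟨j, hj, hj'⟩ := hz
    rw [SimpleGraph.Walk.take_getVert] at hj
    rw [SimpleGraph.Walk.take_length] at hj'
    exact ⟨min n j, by omega, by omega, hj⟩
  have hrt : ∀ n, r ∉ (p.take n).support := by
    intro n h
    obtain ⟨j, _, _, hj⟩ := hsub n r h
    exact hrp (hj ▸ p.getVert_mem_support j)
  by_cases hur : u = r
  · subst hur
    have hne : p.getVert (ℓ - 1) ≠ u := fun h => hrp (h ▸ p.getVert_mem_support _)
    refine ⟨.cons (hr _ hne) (p.take (ℓ-1)).reverse, ?_, ?_⟩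
    · rw [SimpleGraph.Walk.cons_isPath_iff]
      refine ⟨(hp.take _).reverse, ?_⟩
      simpa using hrt _
    · simp [SimpleGraph.Walk.take_length]; omega
  by_cases h1 : ℓ = 1
  · have : G.Adj u v := by
      rw [← SimpleGraph.dist_eq_one_iff_adj]; omega
    exact ⟨this.toWalk, by simp [huv], by simp [h1]⟩
  by_cases hu : u ∈ (p.take (ℓ - 2)).support
  · obtain ⟨i, hi, hi', rfl⟩ := hsub _ _ hu
    have hi0 : i ≠ 0 := by rintro rfl; simp at huv
    have hss : ∀ z ∈ ((p.drop i).take (ℓ - 1 - i)).support,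
        ∃ j, i ≤ j ∧ j ≤ p.length ∧ p.getVert j = z := by
      intro z hz
      rw [SimpleGraph.Walk.mem_support_iff_exists_getVert] at hz
      obtain ⟨j, hj, hj'⟩ := hz
      rw [SimpleGraph.Walk.take_getVert, SimpleGraph.Walk.drop_getVert] at hj
      rw [SimpleGraph.Walk.take_length, SimpleGraph.Walk.drop_length] at hj'
      exact ⟨_, by omega, by omega, hj⟩
    obtain ⟨q, hq, hql⟩ := glue_aux G hr ((p.drop i).take (ℓ - 1 - i)) (p.take (i-1))
      ((hp.drop _).take _) (hp.take _) (by
        intro h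
        obtain ⟨j, _, _, hj⟩ := hss r h
        exact hrp (hj ▸ p.getVert_mem_support j)) (hrt _) (by
        intro z hz hz'
        obtain ⟨a, ha, ha', haz⟩ := hss z hz
        obtain ⟨b, hb, hb', hbz⟩ := hsub _ z hz'
        have := hinj (show a ∈ {i | i ≤ p.length} from ha')
          (show b ∈ {i | i ≤ p.length} from hb') (haz.trans hbz.symm)
        omega)
    refine ⟨q, hq, ?_⟩
    rw [hql, SimpleGraph.Walk.take_length, SimpleGraph.Walk.take_length,
      SimpleGraph.Walk.drop_length]
    omega
  · obtain ⟨q, hq, hql⟩ := glue_aux G hr (SimpleGraph.Walk.nil : G.Walk u u) (p.take (ℓ-2))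
      (by simp) (hp.take _) (by simpa using Ne.symm hur) (hrt _) (by
        intro z hz; simp at hz; subst hz; exact hu)
    refine ⟨q, hq, ?_⟩
    rw [hql, SimpleGraph.Walk.take_length]
    simp; omega
end

section
/- Let k ≥ 5 be an integer and let G be a 2-connected finite simple graph with distinct vertices h and u such that h is adjacent to every vertex of G other than h and u, and h is not adjacent to u. If G contains no cycle of length exactly k, then every path from u to h in G has length at most k − 2. -/
open SimpleGraph in
theorem exists_initial_path {V : Type*} {G : SimpleGraph V} {x h : V} (p : G.Walk x h) :
    p.IsPath → ∀ n, n < p.length →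
    ∃ (y : V) (r : G.Walk x y), r.IsPath ∧ r.length = n ∧ r.support ⊆ p.support ∧
      h ∉ r.support := by
  induction p with
  | nil => intro _ n hn; simp at hn
  | @cons a b c e q ih =>
    intro hp n hn
    rw [Walk.cons_isPath_iff] at hp
    have hac : c ≠ a := by
      rintro rfl; exact hp.2 q.end_mem_support
    cases n with
    | zero => exact ⟨a, Walk.nil, by simp, rfl, by simp, by simpa using hac⟩
    | succ n =>
      obtain ⟨y, r, h1, h2, h3, h4⟩ := ih hp.1 n (by simpa using hn)
      refine ⟨y, Walk.cons e r, ?_, by simp [h2], ?_, by simp [hac, h4]⟩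
      · rw [Walk.cons_isPath_iff]
        exact ⟨h1, fun hh => hp.2 (h3 hh)⟩
      · rw [Walk.support_cons, Walk.support_cons]
        exact List.cons_subset_cons _ h3

open SimpleGraph in
theorem cycle_of_path {V : Type*} {G : SimpleGraph V} {a b h : V} (q : G.Walk a b)
    (hq : q.IsPath) (hh : h ∉ q.support) (hab : a ≠ b) (ha : G.Adj h a) (hb : G.Adj h b) :
    ∃ (v : V) (c : G.Walk v v), c.IsCycle ∧ c.length = q.length + 2 := by
  refine ⟨h, Walk.cons ha (q.concat hb.symm), ?_, by simp⟩
  rw [Walk.cons_isCycle_iff]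
  refine ⟨hq.concat hh _, ?_⟩
  rw [Walk.edges_concat]
  simp only [List.concat_eq_append, List.mem_append, List.mem_singleton, not_or]
  refine ⟨fun he => hh (Walk.fst_mem_support_of_mem_edges _ he), ?_⟩
  have := ha.ne
  grind

open SimpleGraph in
theorem split_path {V : Type*} {G : SimpleGraph V} {x y : V} (r : G.Walk x y) (w : V)
    (hw : w ∈ r.support) (hwx : w ≠ x) :
    ∃ (z : V) (t : G.Walk x z) (d : G.Walk w y), r.support = t.support ++ d.support := by
  induction r with
  | nil => simp at hw; exact absurd hw hwx
  | @cons a b c e q ih =>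
    by_cases hb : w = b
    · subst hb
      exact ⟨a, Walk.nil, q, by simp⟩
    · obtain ⟨z, t, d, ht⟩ := ih (by simpa [hwx] using hw) hb
      exact ⟨z, Walk.cons e t, d, by simp [ht]⟩

theorem stmt_9 {V : Type*} [Fintype V] (G : SimpleGraph V)
    (hG : TwoConnected G) {k : ℕ} (hk : 5 ≤ k)
    {h u : V} (hhu : h ≠ u)
    (hdom : ∀ v : V, v ≠ h → v ≠ u → G.Adj h v) (hnadj : ¬ G.Adj h u)
    (hnocyc : ¬ ∃ (v : V) (c : G.Walk v v), c.IsCycle ∧ c.length = k) :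
    ∀ p : G.Walk u h, p.IsPath → p.length ≤ k - 2 := by
  intro p hp
  by_contra hlen
  push Not at hlen
  cases p with
  | nil => exact hhu rfl
  | @cons _ x _ e p' =>
    rw [SimpleGraph.Walk.cons_isPath_iff] at hp
    obtain ⟨hp', hu⟩ := hp
    rw [SimpleGraph.Walk.length_cons] at hlen
    have hxh : x ≠ h := by rintro rfl; exact hnadj e.symm
    have hxu : x ≠ u := e.ne'
    -- a second neighbour of `u`
    obtain ⟨w, hw, hwx⟩ : ∃ w, G.Adj u w ∧ w ≠ x := by
      obtain ⟨s⟩ := (hG.2 x).preconnected ⟨u, by simpa using hxu.symm⟩ ⟨h, by simpa using hxh.symm⟩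
      cases s with
      | nil => exact absurd rfl hhu
      | @cons _ w _ e s => exact ⟨w.1, e, fun hE => w.2 hE⟩
    have hwh : w ≠ h := by rintro rfl; exact hnadj hw.symm
    have key : ∀ (a b : V) (q : G.Walk a b), q.IsPath → h ∉ q.support → a ≠ u → b ≠ u →
        q.length ≠ k - 2 := by
      intro a b q hq hh ha hb hl
      have hab : a ≠ b := by
        rintro rfl
        have h0 := SimpleGraph.Walk.length_eq_zero_iff.2 (SimpleGraph.Walk.isPath_iff_nil.1 hq)
        omega
      obtain ⟨v, c, hc, hcl⟩ := cycle_of_path q hq hh hab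
        (hdom a (fun hE => hh (hE ▸ q.start_mem_support)) ha)
        (hdom b (fun hE => hh (hE ▸ q.end_mem_support)) hb)
      exact hnocyc ⟨v, c, hc, by omega⟩
    obtain ⟨y, r, hr, hrl, hrs, hrh⟩ := exists_initial_path p' hp' (k - 3) (by omega)
    have hru : u ∉ r.support := fun hE => hu (hrs hE)
    by_cases hwr : w ∈ r.support
    · obtain ⟨z, t, d, htd⟩ := split_path r w hwr hwx
      have hnd := (SimpleGraph.Walk.isPath_def _).1 hr
      have hl := congrArg List.length htd
      simp only [List.length_append, SimpleGraph.Walk.length_support] at hl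
      rw [htd] at hnd hru hrh
      have hz := t.end_mem_support
      have hy := d.end_mem_support
      refine key z y (t.reverse.append (.cons e.symm (.cons hw d))) ?_ ?_ ?_ ?_ ?_
      · rw [SimpleGraph.Walk.isPath_def, SimpleGraph.Walk.support_append]
        simp only [SimpleGraph.Walk.support_reverse, SimpleGraph.Walk.support_cons, List.tail_cons]
        have hrev := List.nodup_reverse (l := t.support)
        grind
      · rw [SimpleGraph.Walk.support_append]
        simp only [SimpleGraph.Walk.support_reverse, SimpleGraph.Walk.support_cons, List.tail_cons]
        grind
      · grind
      · grind
      · simp; omega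
    · obtain ⟨y', r', hr', hrl', hrs', -⟩ := exists_initial_path r hr (k - 4) (by omega)
      have hy' : y' ∈ r.support := hrs' r'.end_mem_support
      refine key w y' (.cons hw.symm (.cons e r')) ?_ ?_ hw.ne' ?_ ?_
      · rw [SimpleGraph.Walk.cons_isPath_iff, SimpleGraph.Walk.cons_isPath_iff]
        refine ⟨⟨hr', fun hE => hru (hrs' hE)⟩, ?_⟩
        simp only [SimpleGraph.Walk.support_cons, List.mem_cons, not_or]
        exact ⟨hw.ne', fun hE => hwr (hrs' hE)⟩
      · simp only [SimpleGraph.Walk.support_cons, List.mem_cons, not_or]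
        exact ⟨hwh.symm, hhu, fun hE => hrh (hrs' hE)⟩
      · rintro rfl; exact hru hy'
      · simp; omega
end

section
/- Let G be a finite simple graph and let P be a path of maximum length in G with vertices x_1, x_2, …, x_m in order. Let 1 ≤ j ≤ m and let Q be a path in G from x_1 to x_j that contains no vertex x_i with i > j. Then Q has length at most j − 1. -/
theorem stmt_11 {V : Type*} [Fintype V] (G : SimpleGraph V)
    {x₁ xₘ : V} (P : G.Walk x₁ xₘ) (hP : P.IsPath)
    (hmax : ∀ (a b : V) (R : G.Walk a b), R.IsPath → R.length ≤ P.length)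
    (j : ℕ) (hj1 : 1 ≤ j) (hjm : j ≤ P.support.length)
    (Q : G.Walk x₁ (P.support.get ⟨j - 1, by omega⟩)) (hQ : Q.IsPath)
    (havoid : ∀ i : ℕ, j < i → (hi : i ≤ P.support.length) →
      P.support.get ⟨i - 1, by omega⟩ ∉ Q.support) :
    Q.length ≤ j - 1 := by
  have hl : P.support.length = P.length + 1 := P.length_support
  have he : P.getVert (j - 1) = P.support.get ⟨j - 1, by omega⟩ := by
    rw [SimpleGraph.Walk.getVert_eq_support_getElem _ (by omega)]; rfl
  have hs : (P.drop (j - 1)).support = P.support.drop (j - 1) := by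
    rw [SimpleGraph.Walk.drop_support_eq_support_drop_min, min_eq_left (by omega)]
  have hlen : (P.drop (j - 1)).length = P.length - (j - 1) := by
    have h := (P.drop (j - 1)).length_support
    rw [hs, List.length_drop] at h
    omega
  have hR := hmax _ _ (Q.append ((P.drop (j - 1)).copy he rfl)) (by
    rw [SimpleGraph.Walk.isPath_def, SimpleGraph.Walk.support_append,
      SimpleGraph.Walk.support_copy, hs, List.tail_drop]
    refine List.Nodup.append hQ.support_nodup (hP.support_nodup.sublist (List.drop_sublist _ _)) ?_
    intro v hv hv'
    obtain ⟨k, hk, rfl⟩ := List.mem_iff_getElem.1 hv'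
    rw [List.length_drop] at hk
    refine havoid (j - 1 + 1 + k + 1) (by omega) (by omega) ?_
    simpa using hv)
  rw [SimpleGraph.Walk.length_append, SimpleGraph.Walk.length_copy, hlen] at hR
  omega
end

section
/- Let k ≥ 5 and s ≥ 3 be integers, set k' = 3 + (k − 2)(s − 2), and let G be a finite simple graph with circumference strictly less than k. Let P be a path in G with vertices x_1, x_2, …, x_m in order, where m ≥ k', and let Y be a path in G from x_1 to x_{k'}. Then Y contains at least s vertices of P. -/
theorem subpath_aux {V : Type*} {G : SimpleGraph V} {a b : V} (P : G.Walk a b) (hP : P.IsPath)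
    (i j : ℕ) (hij : i ≤ j) (hj : j ≤ P.length) :
    ∃ Q : G.Walk (P.getVert i) (P.getVert j), Q.IsPath ∧ Q.support ⊆ P.support ∧
      Q.length = j - i := by
  have e : (P.drop i).getVert (j - i) = P.getVert j := by
    rw [SimpleGraph.Walk.drop_getVert]; congr 1; omega
  refine ⟨((P.drop i).take (j - i)).copy rfl e, ?_, ?_, ?_⟩
  · simpa using (hP.drop i).take (j - i)
  · rw [SimpleGraph.Walk.support_copy, SimpleGraph.Walk.support_take,
      SimpleGraph.Walk.drop_support_eq_support_drop_min]
    exact fun x hx => List.drop_subset _ _ (List.take_subset _ _ hx)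
  · simp; omega

theorem subpath {V : Type*} {G : SimpleGraph V} {a b : V} (P : G.Walk a b) (hP : P.IsPath)
    (i j : ℕ) (hi : i ≤ P.length) (hj : j ≤ P.length) :
    ∃ Q : G.Walk (P.getVert i) (P.getVert j), Q.IsPath ∧ Q.support ⊆ P.support ∧
      Q.length = (j - i) + (i - j) := by
  rcases le_total i j with h | h
  · obtain ⟨Q, h1, h2, h3⟩ := subpath_aux P hP i j h hj
    exact ⟨Q, h1, h2, by omega⟩
  · obtain ⟨Q, h1, h2, h3⟩ := subpath_aux P hP j i h hi
    exact ⟨Q.reverse, h1.reverse, by simpa using h2, by simp; omega⟩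

theorem key {V : Type*} [DecidableEq V] {G : SimpleGraph V} {k : ℕ} (hk : 5 ≤ k)
    (hcirc : ∀ (v : V) (c : G.Walk v v), c.IsCycle → c.length < k)
    {a b : V} (P : G.Walk a b) (hP : P.IsPath) {w v : V} (Y : G.Walk w v) (hY : Y.IsPath)
    (j : ℕ) (hj : j ≤ P.length) (hv : P.getVert j = v) :
    ∃ i, i ≤ P.length ∧ ∃ A : G.Walk w (P.getVert i), A.IsPath ∧ A.support ⊆ Y.support ∧
      (∀ x ∈ A.support, x ∈ P.support → x = P.getVert i) ∧
      (j - i) + (i - j) + (k - 2) ≤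
        (k - 2) * (Y.support.toFinset ∩ P.support.toFinset).card := by
  induction Y with
  | nil =>
    subst hv
    refine ⟨j, hj, .nil, by simp, by simp, by simp, ?_⟩
    simp
  | @cons w w' v h Y ih =>
    rw [SimpleGraph.Walk.cons_isPath_iff] at hY
    obtain ⟨hY, hw⟩ := hY
    obtain ⟨i, hi, A, hA, hAs, hAP, hb⟩ := ih hY hv
    by_cases hwP : w ∈ P.support
    · obtain ⟨l, rfl, hl⟩ := SimpleGraph.Walk.mem_support_iff_exists_getVert.1 hwP
      refine ⟨l, hl, .nil, by simp, by simp, by simp, ?_⟩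
      have hc : ((SimpleGraph.Walk.cons h Y).support.toFinset ∩ P.support.toFinset).card
          = (Y.support.toFinset ∩ P.support.toFinset).card + 1 := by
        rw [SimpleGraph.Walk.support_cons, List.toFinset_cons,
          Finset.insert_inter_of_mem (by simpa using hwP), Finset.card_insert_of_notMem]
        simp [hw]
      rw [hc, mul_add]
      have hd : (l - i) + (i - l) ≤ k - 2 := by
        by_contra hlt
        obtain ⟨Q, hQ, hQs, hQl⟩ := subpath P hP i l hi hl
        have hcyc : ((SimpleGraph.Walk.cons h A).append Q).IsCycle := by
          apply SimpleGraph.Walk.IsPath.isCycle_append _ hQ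
          · intro x hx hx'
            rw [SimpleGraph.Walk.support_cons, List.tail_cons] at hx
            have := hAP x hx (hQs (List.mem_of_mem_tail hx'))
            subst this
            have hn := hQ.support_nodup
            rw [← SimpleGraph.Walk.cons_tail_support] at hn
            exact (List.nodup_cons.1 hn).1 hx'
          · right; omega
          · rw [SimpleGraph.Walk.cons_isPath_iff]
            exact ⟨hA, fun h' => hw (hAs h')⟩
        have := hcirc _ _ hcyc
        simp at this
        omega
      omega
    · refine ⟨i, hi, .cons h A, ?_, ?_, ?_, ?_⟩
      · rw [SimpleGraph.Walk.cons_isPath_iff]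
        exact ⟨hA, fun h' => hw (hAs h')⟩
      · simp only [SimpleGraph.Walk.support_cons]
        exact List.cons_subset_cons _ hAs
      · intro x hx hxP
        rw [SimpleGraph.Walk.support_cons, List.mem_cons] at hx
        rcases hx with rfl | hx
        · exact absurd hxP hwP
        · exact hAP x hx hxP
      · rw [SimpleGraph.Walk.support_cons, List.toFinset_cons,
          Finset.insert_inter_of_notMem (by simpa using hwP)]
        exact hb

theorem stmt_13 {V : Type*} [Fintype V] [DecidableEq V] (G : SimpleGraph V)
    {k s k' : ℕ} (hk : 5 ≤ k) (hs : 3 ≤ s) (hk' : k' = 3 + (k - 2) * (s - 2))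
    (hcirc : ∀ (v : V) (c : G.Walk v v), c.IsCycle → c.length < k)
    {x₁ xₘ : V} (P : G.Walk x₁ xₘ) (hP : P.IsPath)
    (hm : k' ≤ P.support.length)
    (Y : G.Walk x₁ (P.support.get ⟨k' - 1, by omega⟩)) (hY : Y.IsPath) :
    s ≤ (Y.support.toFinset ∩ P.support.toFinset).card := by
  have hlen : k' - 1 ≤ P.length := by
    rw [SimpleGraph.Walk.length_support] at hm; omega
  obtain ⟨i, hi, A, hA, hAs, hAP, hb⟩ := key hk hcirc P hP Y hY (k' - 1) hlen
    (by rw [SimpleGraph.Walk.getVert_eq_support_getElem _ hlen]; rfl)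
  have h0 : x₁ = P.getVert i := hAP x₁ A.start_mem_support P.start_mem_support
  have hi0 : i = 0 := by
    apply hP.getVert_injOn (by simpa using hi) (by simp)
    rw [← h0, SimpleGraph.Walk.getVert_zero]
  subst hi0
  by_contra hlt
  have hle : (Y.support.toFinset ∩ P.support.toFinset).card ≤ (s - 2) + 1 := by omega
  have := Nat.mul_le_mul_left (k - 2) hle
  rw [mul_add] at this
  omega
end
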